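/- Let Q > 2. For every smooth compactly supported function f on ℍⁿ \ {0}, the weighted L² Hardy inequality ((Q − 2)/2)² · ∫_{ℍⁿ} (|z|²/d²) · (|f|²/d²) dξ ≤ ∫_{ℍⁿ} |∇_H f|² dξ holds, with sharp constant. -/

import Mathlib

open MeasureTheory Real

noncomputable section

/-- The underlying space of the Heisenberg group `ℍⁿ = ℝⁿ × ℝⁿ × ℝ`,
with points `ξ = (x, y, t)` and `z = (x, y)`. -/
abbrev Heis (n : ℕ) : Type := (Fin n → ℝ) × (Fin n → ℝ) × ℝ

/-- The left-invariant horizontal vector field `X_j = ∂/∂x_j + 2 y_j ∂/∂t`. -/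
noncomputable def XH {n : ℕ} (j : Fin n) (f : Heis n → ℝ) (ξ : Heis n) : ℝ :=
  fderiv ℝ f ξ (Pi.single j 1, 0, 0) + 2 * ξ.2.1 j * fderiv ℝ f ξ (0, 0, 1)

/-- The left-invariant horizontal vector field `Y_j = ∂/∂y_j − 2 x_j ∂/∂t`. -/
noncomputable def YH {n : ℕ} (j : Fin n) (f : Heis n → ℝ) (ξ : Heis n) : ℝ :=
  fderiv ℝ f ξ (0, Pi.single j 1, 0) - 2 * ξ.1 j * fderiv ℝ f ξ (0, 0, 1)

/-- The horizontal gradient `∇_H f = (X_1 f, …, X_n f, Y_1 f, …, Y_n f)`. -/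
noncomputable def hGrad {n : ℕ} (f : Heis n → ℝ) (ξ : Heis n) : (Fin n → ℝ) × (Fin n → ℝ) :=
  (fun j => XH j f ξ, fun j => YH j f ξ)

/-- Euclidean length of a horizontal vector. -/
noncomputable def hNorm {n : ℕ} (v : (Fin n → ℝ) × (Fin n → ℝ)) : ℝ :=
  Real.sqrt (∑ j, v.1 j ^ 2 + ∑ j, v.2 j ^ 2)

/-- Euclidean inner product of horizontal vectors. -/
noncomputable def hDot {n : ℕ} (v w : (Fin n → ℝ) × (Fin n → ℝ)) : ℝ :=
  ∑ j, v.1 j * w.1 j + ∑ j, v.2 j * w.2 j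

/-- The horizontal divergence `div_H w = Σ_j (X_j w_j + Y_j w_{n+j})`. -/
noncomputable def hDiv {n : ℕ} (V : Heis n → (Fin n → ℝ) × (Fin n → ℝ)) (ξ : Heis n) : ℝ :=
  ∑ j, (XH j (fun η => (V η).1 j) ξ + YH j (fun η => (V η).2 j) ξ)

/-- The sub-Laplacian `Δ_H = Σ_j (X_j² + Y_j²) = div_H ∘ ∇_H`. -/
noncomputable def hLap {n : ℕ} (f : Heis n → ℝ) : Heis n → ℝ :=
  hDiv (hGrad f)

/-- The `p`-sub-Laplacian `Δ_{H,p} f = div_H (|∇_H f|^{p−2} ∇_H f)`. -/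
noncomputable def pLap {n : ℕ} (p : ℝ) (f : Heis n → ℝ) : Heis n → ℝ :=
  hDiv (fun ξ => hNorm (hGrad f ξ) ^ (p - 2) • hGrad f ξ)

/-- The Euclidean norm `|z|` of the horizontal component `z = (x, y)`. -/
noncomputable def zNorm {n : ℕ} (ξ : Heis n) : ℝ :=
  Real.sqrt (∑ j, ξ.1 j ^ 2 + ∑ j, ξ.2.1 j ^ 2)

/-- The Heisenberg gauge `d(z, t) = (|z|⁴ + t²)^{1/4}`. -/
noncomputable def dH {n : ℕ} (ξ : Heis n) : ℝ :=
  ((∑ j, ξ.1 j ^ 2 + ∑ j, ξ.2.1 j ^ 2) ^ 2 + ξ.2.2 ^ 2) ^ (1 / 4 : ℝ)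

/-- A smooth compactly supported function on `ℍⁿ \ {0}`. -/
def IsTestAwayZero {n : ℕ} (f : Heis n → ℝ) : Prop :=
  ContDiff ℝ (⊤ : ℕ∞) f ∧ HasCompactSupport f ∧ (0 : Heis n) ∉ tsupport f

/-!
For a horizontal vector field `V`, integrating `0 ≤ |∇_H f + f V|²` and using
`∫ div_H (f² V) = 0` gives `∫ (div_H V - |V|²) f² ≤ ∫ |∇_H f|²`. The choice `V = n ∇_H log d`,
for which `div_H V = 2 n² |z|² / d⁴` and `|V|² = n² |z|² / d⁴`, is the Hardy inequality with
constant `n² = ((Q - 2) / 2)²`.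

Equality would force `f` to be a multiple of `d⁻ⁿ`, so the constant is tested on
`f = d⁻ⁿ ψ(log d)`. The distribution of `log d` under `|z|² d^(-2n-4) dξ` is translation invariant,
because dilations of `ℍⁿ` translate `log d`; hence it is a multiple of Lebesgue measure, and the
quotient of the two integrals is `∫ (ψ' - n ψ)² / ∫ ψ² = n² + ∫ ψ'² / ∫ ψ²`. Stretching `ψ`
makes this as close to `n²` as desired.
-/

section HorizontalVectors

variable {n : ℕ} (c : ℝ) (u v w : (Fin n → ℝ) × (Fin n → ℝ))

theorem hDot_comm : hDot v w = hDot w v := by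
  simp only [hDot, mul_comm]

theorem hDot_add_left : hDot (u + v) w = hDot u w + hDot v w := by
  simp only [hDot, Prod.fst_add, Prod.snd_add, Pi.add_apply, add_mul, Finset.sum_add_distrib]
  ring

theorem hDot_add_right : hDot u (v + w) = hDot u v + hDot u w := by
  simp only [hDot_comm u, hDot_add_left]

theorem hDot_smul_left : hDot (c • v) w = c * hDot v w := by
  simp only [hDot, Prod.smul_fst, Prod.smul_snd, Pi.smul_apply, smul_eq_mul, mul_assoc,
    mul_add, Finset.mul_sum]

theorem hDot_smul_right : hDot v (c • w) = c * hDot v w := by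
  rw [hDot_comm, hDot_smul_left, hDot_comm]

theorem hDot_single_inl (j : Fin n) : hDot (Pi.single j 1, 0) v = v.1 j := by
  simp [hDot, Pi.single_apply]

theorem hDot_single_inr (j : Fin n) : hDot (0, Pi.single j 1) v = v.2 j := by
  simp [hDot, Pi.single_apply]

theorem hNorm_sq : hNorm v ^ 2 = hDot v v := by
  rw [hNorm, Real.sq_sqrt (by positivity)]
  simp only [hDot, sq]

theorem hNorm_smul_sq : hNorm (c • v) ^ 2 = c ^ 2 * hNorm v ^ 2 := by
  rw [hNorm_sq, hNorm_sq, hDot_smul_left, hDot_smul_right]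
  ring

theorem hNorm_add_sq : hNorm (v + w) ^ 2 = hNorm v ^ 2 + 2 * hDot v w + hNorm w ^ 2 := by
  simp only [hNorm_sq, hDot_add_left, hDot_add_right, hDot_comm w v]
  ring

theorem continuous_hNorm_sq : Continuous fun v : (Fin n → ℝ) × (Fin n → ℝ) => hNorm v ^ 2 := by
  simp only [hNorm_sq, hDot]
  fun_prop

end HorizontalVectors

section HorizontalCalculus

variable {n : ℕ} (w : (Fin n → ℝ) × (Fin n → ℝ)) {f g : Heis n → ℝ}
  {V : Heis n → (Fin n → ℝ) × (Fin n → ℝ)} {ξ : Heis n}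

/-- The value at `ξ` of the left-invariant vector field on `ℍⁿ` equal to `(w, 0)` at the origin.
For `w = a + ib` and `z = x + iy` its vertical component is `2 Im(w̄ z)`. -/
def hVec (w : (Fin n → ℝ) × (Fin n → ℝ)) (ξ : Heis n) : Heis n :=
  (w.1, w.2, 2 * hDot w (ξ.2.1, -ξ.1))

/-- The derivative of `f` along the left-invariant horizontal vector field `hVec w`; taking for `w`
the standard basis vectors gives `X_j` and `Y_j`, so that both are treated at once. -/
def hDeriv (w : (Fin n → ℝ) × (Fin n → ℝ)) (f : Heis n → ℝ) (ξ : Heis n) : ℝ :=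
  fderiv ℝ f ξ (hVec w ξ)

theorem hDeriv_eq (f : Heis n → ℝ) (ξ : Heis n) :
    hDeriv w f ξ =
      fderiv ℝ f ξ (w.1, w.2, 0) + 2 * hDot w (ξ.2.1, -ξ.1) * fderiv ℝ f ξ (0, 0, 1) := by
  rw [hDeriv, ← smul_eq_mul, ← map_smul, ← map_add]
  simp [hVec]

theorem XH_eq_hDeriv (j : Fin n) (f : Heis n → ℝ) : XH j f = hDeriv (Pi.single j 1, 0) f := by
  ext ξ
  rw [XH, hDeriv_eq, hDot_single_inl]

theorem YH_eq_hDeriv (j : Fin n) (f : Heis n → ℝ) : YH j f = hDeriv (0, Pi.single j 1) f := by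
  ext ξ
  simp only [YH, hDeriv_eq, hDot_single_inr, Pi.neg_apply]
  ring

theorem hGrad_eq_of_forall_hDeriv {v : (Fin n → ℝ) × (Fin n → ℝ)}
    (h : ∀ w, hDeriv w f ξ = hDot w v) : hGrad f ξ = v := by
  ext j
  · simp only [hGrad, XH_eq_hDeriv, h, hDot_single_inl]
  · simp only [hGrad, YH_eq_hDeriv, h, hDot_single_inr]

theorem hDiv_eq_sum_hDeriv (V : Heis n → (Fin n → ℝ) × (Fin n → ℝ)) (ξ : Heis n) :
    hDiv V ξ = ∑ j, (hDeriv (Pi.single j 1, 0) (fun η => (V η).1 j) ξ +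
      hDeriv (0, Pi.single j 1) (fun η => (V η).2 j) ξ) := by
  simp only [hDiv, XH_eq_hDeriv, YH_eq_hDeriv]

theorem hDeriv_add (hf : DifferentiableAt ℝ f ξ) (hg : DifferentiableAt ℝ g ξ) :
    hDeriv w (fun η => f η + g η) ξ = hDeriv w f ξ + hDeriv w g ξ := by
  simp only [hDeriv, fderiv_fun_add hf hg, add_apply]

theorem hDeriv_mul (hf : DifferentiableAt ℝ f ξ) (hg : DifferentiableAt ℝ g ξ) :
    hDeriv w (fun η => f η * g η) ξ = hDeriv w f ξ * g ξ + f ξ * hDeriv w g ξ := by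
  simp only [hDeriv, fderiv_fun_mul hf hg, add_apply, smul_apply, smul_eq_mul]
  ring

theorem hDeriv_comp {φ : ℝ → ℝ} {φ' : ℝ} (hφ : HasDerivAt φ φ' (g ξ))
    (hg : DifferentiableAt ℝ g ξ) :
    hDeriv w (fun η => φ (g η)) ξ = φ' * hDeriv w g ξ := by
  have hφg : HasFDerivAt (fun η => φ (g η)) (φ' • fderiv ℝ g ξ) ξ :=
    hφ.comp_hasFDerivAt ξ hg.hasFDerivAt
  rw [hDeriv, hφg.fderiv, smul_apply, smul_eq_mul, hDeriv]

theorem hGrad_comp {φ : ℝ → ℝ} {φ' : ℝ} (hφ : HasDerivAt φ φ' (g ξ))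
    (hg : DifferentiableAt ℝ g ξ) : hGrad (fun η => φ (g η)) ξ = φ' • hGrad g ξ := by
  ext j
  · simp only [hGrad, XH_eq_hDeriv, hDeriv_comp _ hφ hg, Prod.smul_fst, Pi.smul_apply, smul_eq_mul]
  · simp only [hGrad, YH_eq_hDeriv, hDeriv_comp _ hφ hg, Prod.smul_snd, Pi.smul_apply, smul_eq_mul]

theorem hGrad_add (hf : DifferentiableAt ℝ f ξ) (hg : DifferentiableAt ℝ g ξ) :
    hGrad (fun η => f η + g η) ξ = hGrad f ξ + hGrad g ξ := by
  ext j
  · simp only [hGrad, XH_eq_hDeriv, hDeriv_add _ hf hg, Prod.fst_add, Pi.add_apply]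
  · simp only [hGrad, YH_eq_hDeriv, hDeriv_add _ hf hg, Prod.snd_add, Pi.add_apply]

theorem hDiv_add {W : Heis n → (Fin n → ℝ) × (Fin n → ℝ)} (hV : DifferentiableAt ℝ V ξ)
    (hW : DifferentiableAt ℝ W ξ) : hDiv (fun η => V η + W η) ξ = hDiv V ξ + hDiv W ξ := by
  have h₁ (j : Fin n) := hDeriv_add (Pi.single j 1, 0) (f := fun η => (V η).1 j)
    (g := fun η => (W η).1 j) (ξ := ξ) (by fun_prop) (by fun_prop)
  have h₂ (j : Fin n) := hDeriv_add (0, Pi.single j 1) (f := fun η => (V η).2 j)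
    (g := fun η => (W η).2 j) (ξ := ξ) (by fun_prop) (by fun_prop)
  simp only [hDiv_eq_sum_hDeriv, Prod.fst_add, Prod.snd_add, Pi.add_apply, h₁, h₂,
    ← Finset.sum_add_distrib]
  exact Finset.sum_congr rfl fun j _ => add_add_add_comm _ _ _ _

theorem hDiv_smul (hg : DifferentiableAt ℝ g ξ) (hV : DifferentiableAt ℝ V ξ) :
    hDiv (fun η => g η • V η) ξ = hDot (hGrad g ξ) (V ξ) + g ξ * hDiv V ξ := by
  have hV₁ (j : Fin n) : DifferentiableAt ℝ (fun η => (V η).1 j) ξ := by fun_prop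
  have hV₂ (j : Fin n) : DifferentiableAt ℝ (fun η => (V η).2 j) ξ := by fun_prop
  simp only [hDiv_eq_sum_hDeriv, hDot, hGrad, XH_eq_hDeriv, YH_eq_hDeriv, Prod.smul_fst,
    Prod.smul_snd, Pi.smul_apply, smul_eq_mul, hDeriv_mul _ hg (hV₁ _), hDeriv_mul _ hg (hV₂ _),
    Finset.mul_sum, Finset.sum_add_distrib, mul_add]
  ring

theorem hDeriv_of_notMem_tsupport (hξ : ξ ∉ tsupport f) : hDeriv w f ξ = 0 := by
  simp only [hDeriv, fderiv_of_notMem_tsupport ℝ hξ, zero_apply]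

theorem hGrad_of_notMem_tsupport (hξ : ξ ∉ tsupport f) : hGrad f ξ = 0 :=
  hGrad_eq_of_forall_hDeriv fun w => by simp [hDeriv_of_notMem_tsupport w hξ, hDot]

theorem hDiv_of_notMem_tsupport (hξ : ξ ∉ tsupport V) : hDiv V ξ = 0 := by
  have h₁ (j : Fin n) : ξ ∉ tsupport fun η => (V η).1 j :=
    fun h => hξ (tsupport_comp_subset (g := fun v : (Fin n → ℝ) × (Fin n → ℝ) => v.1 j) rfl V h)
  have h₂ (j : Fin n) : ξ ∉ tsupport fun η => (V η).2 j :=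
    fun h => hξ (tsupport_comp_subset (g := fun v : (Fin n → ℝ) × (Fin n → ℝ) => v.2 j) rfl V h)
  simp [hDiv_eq_sum_hDeriv, hDeriv_of_notMem_tsupport _ (h₁ _), hDeriv_of_notMem_tsupport _ (h₂ _)]

theorem hasCompactSupport_hDeriv (hf : HasCompactSupport f) : HasCompactSupport (hDeriv w f) :=
  hf.mono' fun _ hξ => by_contra fun h => hξ (hDeriv_of_notMem_tsupport w h)

theorem hDeriv_eq_of_hasDerivAt {f' : ℝ} (hf : DifferentiableAt ℝ f ξ)
    (h : HasDerivAt (fun s : ℝ => f (ξ + s • hVec w ξ)) f' 0) : hDeriv w f ξ = f' := by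
  rw [hDeriv, ← hf.lineDeriv_eq_fderiv, lineDeriv, h.deriv]

theorem continuousAt_hDeriv (hf : ContDiffAt ℝ 1 f ξ) : ContinuousAt (hDeriv w f) ξ := by
  have hvec : Continuous (hVec w) := by
    unfold hVec hDot
    fun_prop
  exact (hf.continuousAt_fderiv one_ne_zero).clm_apply hvec.continuousAt

theorem continuous_hDeriv (hf : ContDiff ℝ 1 f) : Continuous (hDeriv w f) :=
  continuous_iff_continuousAt.2 fun _ => continuousAt_hDeriv w hf.contDiffAt

theorem continuous_hGrad (hf : ContDiff ℝ 1 f) : Continuous (hGrad f) := by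
  unfold hGrad
  simp only [XH_eq_hDeriv, YH_eq_hDeriv]
  have := fun w => continuous_hDeriv w hf
  fun_prop

theorem continuousAt_hDiv (hV : ContDiffAt ℝ 1 V ξ) : ContinuousAt (hDiv V) ξ := by
  have hV₁ (j : Fin n) : ContDiffAt ℝ 1 (fun η => (V η).1 j) ξ := by fun_prop
  have hV₂ (j : Fin n) : ContDiffAt ℝ 1 (fun η => (V η).2 j) ξ := by fun_prop
  simp only [funext (hDiv_eq_sum_hDeriv V)]
  exact tendsto_finsetSum _ fun j _ =>
    (continuousAt_hDeriv _ (hV₁ j)).add (continuousAt_hDeriv _ (hV₂ j))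

end HorizontalCalculus

section DivergenceTheorem

variable {n : ℕ}

instance Heis.isAddHaarMeasure_volume : (volume : Measure (Heis n)).IsAddHaarMeasure :=
  Measure.prod.instIsAddHaarMeasure _ ((volume : Measure (Fin n → ℝ)).prod (volume : Measure ℝ))

theorem integrable_mul_fderiv_apply {E : Type*} [NormedAddCommGroup E] [NormedSpace ℝ E]
    [MeasurableSpace E] [OpensMeasurableSpace E] {μ : Measure E}
    [IsFiniteMeasureOnCompacts μ] {f g : E → ℝ} (hf : ContDiff ℝ 1 f) (hc : HasCompactSupport f)
    (hg : Continuous g) (v : E) : Integrable (fun x => g x * fderiv ℝ f x v) μ := by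
  have : Continuous (fderiv ℝ f) := hf.continuous_fderiv one_ne_zero
  exact Continuous.integrable_of_hasCompactSupport (by fun_prop)
    (hc.fderiv_apply (𝕜 := ℝ) v).mul_left

theorem integral_mul_fderiv_apply_eq_zero {E : Type*} [NormedAddCommGroup E] [NormedSpace ℝ E]
    [FiniteDimensional ℝ E] [MeasurableSpace E] [BorelSpace E] {μ : Measure E}
    [μ.IsAddHaarMeasure] {f g : E → ℝ} (hf : ContDiff ℝ 1 f) (hc : HasCompactSupport f)
    (hg : Differentiable ℝ g) {v : E} (hgv : ∀ x, fderiv ℝ g x v = 0) :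
    ∫ x, g x * fderiv ℝ f x v ∂μ = 0 := by
  have hgf : Integrable (fun x => g x * f x) μ :=
    (hg.continuous.mul hf.continuous).integrable_of_hasCompactSupport hc.mul_left
  rw [integral_mul_fderiv_eq_neg_fderiv_mul_of_integrable (by simp [hgv])
    (integrable_mul_fderiv_apply hf hc hg.continuous v) hgf (fun x _ => hg x)
    (fun x _ => hf.differentiable one_ne_zero x)]
  simp [hgv]

theorem integrable_hDeriv (w : (Fin n → ℝ) × (Fin n → ℝ)) {f : Heis n → ℝ}
    (hf : ContDiff ℝ 1 f) (hc : HasCompactSupport f) : Integrable (hDeriv w f) :=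
  (continuous_hDeriv w hf).integrable_of_hasCompactSupport (hasCompactSupport_hDeriv w hc)

theorem integral_hDeriv_eq_zero (w : (Fin n → ℝ) × (Fin n → ℝ)) {f : Heis n → ℝ}
    (hf : ContDiff ℝ 1 f) (hc : HasCompactSupport f) : ∫ ξ, hDeriv w f ξ = 0 := by
  let σ : Heis n → ℝ := fun ξ => 2 * hDot w (ξ.2.1, -ξ.1)
  have hσ : Differentiable ℝ σ := by
    unfold σ hDot
    fun_prop
  have hσ_vert (ξ : Heis n) : fderiv ℝ σ ξ (0, 0, 1) = 0 := by
    have hline (s : ℝ) : σ (ξ + s • (0, 0, 1)) = σ ξ := by simp [σ]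
    rw [← (hσ ξ).lineDeriv_eq_fderiv, lineDeriv]
    simp only [hline, deriv_const]
  have hone : Differentiable ℝ fun _ : Heis n => (1 : ℝ) := differentiable_const 1
  calc ∫ ξ, hDeriv w f ξ
      = ∫ ξ, (1 * fderiv ℝ f ξ (w.1, w.2, 0) + σ ξ * fderiv ℝ f ξ (0, 0, 1)) := by
        simp only [hDeriv_eq, one_mul, σ]
    _ = 0 := by
        rw [integral_add (integrable_mul_fderiv_apply hf hc hone.continuous _)
          (integrable_mul_fderiv_apply hf hc hσ.continuous _),
          integral_mul_fderiv_apply_eq_zero hf hc hone (by simp),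
          integral_mul_fderiv_apply_eq_zero hf hc hσ hσ_vert, add_zero]

variable {V : Heis n → (Fin n → ℝ) × (Fin n → ℝ)}

theorem integrable_hDiv (hV : ContDiff ℝ 1 V) (hc : HasCompactSupport V) :
    Integrable (hDiv V) :=
  (continuous_iff_continuousAt.2 fun _ => continuousAt_hDiv hV.contDiffAt)
    |>.integrable_of_hasCompactSupport
      (hc.mono' fun _ hξ => by_contra fun h => hξ (hDiv_of_notMem_tsupport h))

theorem integral_hDiv_eq_zero (hV : ContDiff ℝ 1 V) (hc : HasCompactSupport V) :
    ∫ ξ, hDiv V ξ = 0 := by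
  have hV₁ (j : Fin n) : ContDiff ℝ 1 fun η => (V η).1 j := by fun_prop
  have hV₂ (j : Fin n) : ContDiff ℝ 1 fun η => (V η).2 j := by fun_prop
  have hc₁ (j : Fin n) : HasCompactSupport fun η => (V η).1 j :=
    hc.comp_left (g := fun v : (Fin n → ℝ) × (Fin n → ℝ) => v.1 j) rfl
  have hc₂ (j : Fin n) : HasCompactSupport fun η => (V η).2 j :=
    hc.comp_left (g := fun v : (Fin n → ℝ) × (Fin n → ℝ) => v.2 j) rfl
  have hi₁ (j : Fin n) := integrable_hDeriv (Pi.single j 1, 0) (hV₁ j) (hc₁ j)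
  have hi₂ (j : Fin n) := integrable_hDeriv (0, Pi.single j 1) (hV₂ j) (hc₂ j)
  simp only [hDiv_eq_sum_hDeriv]
  rw [integral_finsetSum (f := fun j ξ => hDeriv (Pi.single j 1, 0) (fun η => (V η).1 j) ξ +
    hDeriv (0, Pi.single j 1) (fun η => (V η).2 j) ξ) _ fun j _ => (hi₁ j).add (hi₂ j)]
  refine Finset.sum_eq_zero fun j _ => ?_
  rw [integral_add (hi₁ j) (hi₂ j), integral_hDeriv_eq_zero _ (hV₁ j) (hc₁ j),
    integral_hDeriv_eq_zero _ (hV₂ j) (hc₂ j), add_zero]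

end DivergenceTheorem

section VectorFieldHardy

theorem contDiff_of_tsupport {E F : Type*} [NormedAddCommGroup E] [NormedSpace ℝ E]
    [NormedAddCommGroup F] [NormedSpace ℝ F] {m : WithTop ℕ∞} {f : E → F}
    (hf : ∀ x ∈ tsupport f, ContDiffAt ℝ m f x) : ContDiff ℝ m f :=
  contDiff_iff_contDiffAt.2 fun x => by
    by_cases hx : x ∈ tsupport f
    · exact hf x hx
    · exact (contDiffAt_const (c := 0)).congr_of_eventuallyEq
        (notMem_tsupport_iff_eventuallyEq.1 hx)

variable {n : ℕ} {f : Heis n → ℝ} {V : Heis n → (Fin n → ℝ) × (Fin n → ℝ)}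

-- The difference of the two sides is `|∇_H f + f V|²`.
theorem hDiv_sub_hNorm_sq_mul_sq_le {ξ : Heis n} (hf : DifferentiableAt ℝ f ξ)
    (hV : DifferentiableAt ℝ V ξ) :
    (hDiv V ξ - hNorm (V ξ) ^ 2) * f ξ ^ 2 ≤
      hNorm (hGrad f ξ) ^ 2 + hDiv (fun η => f η ^ 2 • V η) ξ := by
  have hsq : hGrad (fun η => f η ^ 2) ξ = (2 * f ξ) • hGrad f ξ :=
    hGrad_comp (by simpa using hasDerivAt_pow 2 (f ξ)) hf
  have hsquare : 0 ≤ hNorm (hGrad f ξ + f ξ • V ξ) ^ 2 := sq_nonneg _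
  rw [hNorm_add_sq, hNorm_smul_sq, hDot_smul_right] at hsquare
  rw [hDiv_smul (hf.fun_pow 2) hV, hsq, hDot_smul_left]
  linarith

theorem tsupport_sq_smul_subset : tsupport (fun ξ => f ξ ^ 2 • V ξ) ⊆ tsupport f :=
  closure_mono fun ξ hξ h => hξ (by simp [h])

theorem contDiff_sq_smul (hf : ContDiff ℝ 1 f) (hV : ∀ ξ ∈ tsupport f, ContDiffAt ℝ 1 V ξ) :
    ContDiff ℝ 1 fun ξ => f ξ ^ 2 • V ξ :=
  contDiff_of_tsupport fun ξ hξ =>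
    (hf.pow 2).contDiffAt.smul (hV ξ (tsupport_sq_smul_subset hξ))

theorem integrable_hDiv_sub_hNorm_sq_mul_sq (hf : Continuous f) (hc : HasCompactSupport f)
    (hV : ∀ ξ ∈ tsupport f, ContDiffAt ℝ 1 V ξ) :
    Integrable fun ξ => (hDiv V ξ - hNorm (V ξ) ^ 2) * f ξ ^ 2 := by
  have hsupp : tsupport (fun ξ => (hDiv V ξ - hNorm (V ξ) ^ 2) * f ξ ^ 2) ⊆ tsupport f :=
    closure_mono fun ξ hξ h => hξ (by simp [h])
  refine Continuous.integrable_of_hasCompactSupport (continuous_of_tsupport fun ξ hξ => ?_)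
    (hc.mono' (subset_closure.trans hsupp))
  have hVξ := hV ξ (hsupp hξ)
  have hnorm : ContinuousAt (fun η => hNorm (V η) ^ 2) ξ :=
    continuous_hNorm_sq.continuousAt.comp hVξ.continuousAt
  exact ((continuousAt_hDiv hVξ).sub hnorm).mul (hf.pow 2).continuousAt

theorem integrable_hNorm_hGrad_sq (hf : ContDiff ℝ 1 f) (hc : HasCompactSupport f) :
    Integrable fun ξ => hNorm (hGrad f ξ) ^ 2 :=
  (continuous_hNorm_sq.comp (continuous_hGrad hf)).integrable_of_hasCompactSupport <|
    hc.mono' fun ξ hξ => by_contra fun h => hξ (by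
      simp [hGrad_of_notMem_tsupport h, hNorm])

theorem integral_hDiv_sub_hNorm_sq_mul_sq_le (hf : ContDiff ℝ 1 f) (hc : HasCompactSupport f)
    (hV : ∀ ξ ∈ tsupport f, ContDiffAt ℝ 1 V ξ) :
    ∫ ξ, (hDiv V ξ - hNorm (V ξ) ^ 2) * f ξ ^ 2 ≤ ∫ ξ, hNorm (hGrad f ξ) ^ 2 := by
  have hfV := contDiff_sq_smul hf hV
  have hfV_c : HasCompactSupport fun ξ => f ξ ^ 2 • V ξ := hc.mono' <|
    subset_closure.trans tsupport_sq_smul_subset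
  calc ∫ ξ, (hDiv V ξ - hNorm (V ξ) ^ 2) * f ξ ^ 2
      ≤ ∫ ξ, (hNorm (hGrad f ξ) ^ 2 + hDiv (fun η => f η ^ 2 • V η) ξ) := by
        refine integral_mono (integrable_hDiv_sub_hNorm_sq_mul_sq hf.continuous hc hV)
          ((integrable_hNorm_hGrad_sq hf hc).add (integrable_hDiv hfV hfV_c)) fun ξ => ?_
        by_cases hξ : ξ ∈ tsupport f
        · exact hDiv_sub_hNorm_sq_mul_sq_le (hf.differentiable one_ne_zero ξ)
            ((hV ξ hξ).differentiableAt one_ne_zero)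
        · have hfV_ξ : ξ ∉ tsupport fun η => f η ^ 2 • V η :=
            fun h => hξ (tsupport_sq_smul_subset h)
          simp only [image_eq_zero_of_notMem_tsupport hξ, hDiv_of_notMem_tsupport hfV_ξ]
          simp [sq_nonneg]
    _ = ∫ ξ, hNorm (hGrad f ξ) ^ 2 := by
        rw [integral_add (integrable_hNorm_hGrad_sq hf hc) (integrable_hDiv hfV hfV_c),
          integral_hDiv_eq_zero hfV hfV_c, add_zero]

end VectorFieldHardy

section Gauge

variable {n : ℕ} (ξ : Heis n)

theorem zNorm_sq : zNorm ξ ^ 2 = hDot (ξ.1, ξ.2.1) (ξ.1, ξ.2.1) :=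
  hNorm_sq (ξ.1, ξ.2.1)

theorem dH_nonneg : 0 ≤ dH ξ := by
  unfold dH
  positivity

theorem dH_pow_four : dH ξ ^ 4 = (zNorm ξ ^ 2) ^ 2 + ξ.2.2 ^ 2 := by
  rw [zNorm, Real.sq_sqrt (by positivity), dH, ← Real.rpow_natCast, ← Real.rpow_mul (by positivity)]
  norm_num

theorem continuous_dH : Continuous (dH : Heis n → ℝ) := by
  unfold dH
  exact Continuous.rpow_const (by fun_prop) fun _ => Or.inr (by norm_num)

theorem zNorm_le_dH : zNorm ξ ≤ dH ξ := by
  refine le_of_pow_le_pow_left₀ four_ne_zero (dH_nonneg ξ) ?_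
  rw [dH_pow_four]
  nlinarith [sq_nonneg ξ.2.2]

theorem norm_horizontal_le_zNorm : ‖(ξ.1, ξ.2.1)‖ ≤ zNorm ξ := by
  have hx : 0 ≤ ∑ j, ξ.1 j ^ 2 := by positivity
  have hy : 0 ≤ ∑ j, ξ.2.1 j ^ 2 := by positivity
  refine max_le ?_ ?_ <;> refine (pi_norm_le_iff_of_nonneg (Real.sqrt_nonneg _)).2 fun j =>
    Real.abs_le_sqrt ?_
  · have := Finset.single_le_sum (fun i _ => sq_nonneg (ξ.1 i)) (Finset.mem_univ j)
    linarith
  · have := Finset.single_le_sum (fun i _ => sq_nonneg (ξ.2.1 i)) (Finset.mem_univ j)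
    linarith

theorem norm_le_max_dH : ‖ξ‖ ≤ max (dH ξ) (dH ξ ^ 2) := by
  have hz := (norm_horizontal_le_zNorm ξ).trans (zNorm_le_dH ξ)
  have ht : ‖ξ.2.2‖ ≤ dH ξ ^ 2 :=
    abs_le_of_sq_le_sq (by nlinarith [dH_pow_four ξ, sq_nonneg (zNorm ξ ^ 2)]) (sq_nonneg _)
  rw [Prod.norm_mk, max_le_iff] at hz
  exact max_le (le_max_of_le_left hz.1)
    (max_le (le_max_of_le_left hz.2) (le_max_of_le_right ht))

@[simp]
theorem dH_zero : dH (0 : Heis n) = 0 := by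
  simp [dH]

variable {ξ} in
theorem dH_pos (hξ : ξ ≠ 0) : 0 < dH ξ := by
  refine (dH_nonneg ξ).lt_of_ne' fun h => hξ (norm_le_zero_iff.1 ?_)
  simpa [h] using norm_le_max_dH ξ

theorem isCompact_preimage_dH {K : Set ℝ} (hK : IsCompact K) :
    IsCompact (dH ⁻¹' K : Set (Heis n)) := by
  obtain ⟨b, hb⟩ := hK.bddAbove
  refine Metric.isCompact_of_isClosed_isBounded (hK.isClosed.preimage continuous_dH)
    (isBounded_iff_forall_norm_le.2 ⟨max b (b ^ 2), fun ξ hξ => ?_⟩)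
  have hξb : dH ξ ≤ b := hb hξ
  exact (norm_le_max_dH ξ).trans
    (max_le_max hξb (pow_le_pow_left₀ (dH_nonneg ξ) hξb 2))

theorem contDiff_zNorm_sq {m : WithTop ℕ∞} : ContDiff ℝ m fun ξ : Heis n => zNorm ξ ^ 2 := by
  simp only [zNorm_sq, hDot]
  fun_prop

theorem contDiff_dH_pow_four {m : WithTop ℕ∞} : ContDiff ℝ m fun ξ : Heis n => dH ξ ^ 4 := by
  simp only [dH_pow_four]
  exact (contDiff_zNorm_sq.pow 2).add (by fun_prop)

theorem log_dH : log (dH ξ) = 1 / 4 * log (dH ξ ^ 4) := by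
  rw [Real.log_pow]
  push_cast
  ring

variable {ξ} in
theorem contDiffAt_log_dH {m : WithTop ℕ∞} (hξ : ξ ≠ 0) :
    ContDiffAt ℝ m (fun η => log (dH η)) ξ := by
  simp only [log_dH]
  exact contDiffAt_const.mul (contDiff_dH_pow_four.contDiffAt.log (pow_pos (dH_pos hξ) 4).ne')

/-- The horizontal vector field `|z|² (x, y) + t (y, -x)`, which is `¼ ∇_H d⁴`. -/
def gaugeField (ξ : Heis n) : (Fin n → ℝ) × (Fin n → ℝ) :=
  zNorm ξ ^ 2 • (ξ.1, ξ.2.1) + ξ.2.2 • (ξ.2.1, -ξ.1)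

theorem contDiff_gaugeField {m : WithTop ℕ∞} : ContDiff ℝ m (gaugeField (n := n)) :=
  (contDiff_zNorm_sq.smul (by fun_prop)).add (by fun_prop)

theorem hNorm_gaugeField_sq : hNorm (gaugeField ξ) ^ 2 = zNorm ξ ^ 2 * dH ξ ^ 4 := by
  have horth : hDot (ξ.1, ξ.2.1) (ξ.2.1, -ξ.1) = 0 := by
    simp [hDot, mul_comm]
  have hrot : hNorm (ξ.2.1, -ξ.1) ^ 2 = zNorm ξ ^ 2 := by
    simp [hNorm, zNorm, add_comm]
  have hz : hNorm (ξ.1, ξ.2.1) ^ 2 = zNorm ξ ^ 2 := rfl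
  rw [gaugeField, hNorm_add_sq, hNorm_smul_sq, hNorm_smul_sq, hDot_smul_left, hDot_smul_right,
    horth, hrot, hz, dH_pow_four]
  ring

theorem hDeriv_fst_apply (w : (Fin n → ℝ) × (Fin n → ℝ)) (j : Fin n) :
    hDeriv w (fun η => η.1 j) ξ = w.1 j :=
  hDeriv_eq_of_hasDerivAt w (by fun_prop)
    (by simpa [hVec] using ((hasDerivAt_id (0 : ℝ)).mul_const (w.1 j)).const_add (ξ.1 j))

theorem hDeriv_snd_fst_apply (w : (Fin n → ℝ) × (Fin n → ℝ)) (j : Fin n) :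
    hDeriv w (fun η => η.2.1 j) ξ = w.2 j :=
  hDeriv_eq_of_hasDerivAt w (by fun_prop)
    (by simpa [hVec] using ((hasDerivAt_id (0 : ℝ)).mul_const (w.2 j)).const_add (ξ.2.1 j))

theorem hGrad_snd_snd : hGrad (fun η => η.2.2) ξ = (2 : ℝ) • (ξ.2.1, -ξ.1) :=
  hGrad_eq_of_forall_hDeriv fun w => hDeriv_eq_of_hasDerivAt w (by fun_prop) <| by
    rw [hDot_smul_right]
    simpa [hVec] using
      ((hasDerivAt_id (0 : ℝ)).mul_const (2 * hDot w (ξ.2.1, -ξ.1))).const_add ξ.2.2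

theorem hGrad_zNorm_sq : hGrad (fun η => zNorm η ^ 2) ξ = (2 : ℝ) • (ξ.1, ξ.2.1) := by
  refine hGrad_eq_of_forall_hDeriv fun w =>
    hDeriv_eq_of_hasDerivAt w (contDiff_zNorm_sq.differentiable one_ne_zero ξ) ?_
  have hline (s : ℝ) : zNorm (ξ + s • hVec w ξ) ^ 2 =
      zNorm ξ ^ 2 + 2 * (s * hDot w (ξ.1, ξ.2.1)) + s ^ 2 * hNorm w ^ 2 := by
    rw [hDot_comm w, ← hNorm_smul_sq, ← hDot_smul_right]
    exact hNorm_add_sq (ξ.1, ξ.2.1) (s • w)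
  simp only [hline]
  have h := ((((hasDerivAt_id (0 : ℝ)).mul_const (hDot w (ξ.1, ξ.2.1))).const_mul 2).const_add
    (zNorm ξ ^ 2)).fun_add ((hasDerivAt_pow 2 (0 : ℝ)).mul_const (hNorm w ^ 2))
  rw [hDot_smul_right]
  simpa using h

theorem hGrad_dH_pow_four : hGrad (fun η => dH η ^ 4) ξ = (4 : ℝ) • gaugeField ξ := by
  have hz : DifferentiableAt ℝ (fun η : Heis n => zNorm η ^ 2) ξ :=
    contDiff_zNorm_sq.differentiable one_ne_zero ξ
  have ht : DifferentiableAt ℝ (fun η : Heis n => η.2.2) ξ := by fun_prop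
  have hz_sq : hGrad (fun η => (zNorm η ^ 2) ^ 2) ξ = (2 * zNorm ξ ^ 2) • _ :=
    hGrad_comp (by simpa using hasDerivAt_pow 2 (zNorm ξ ^ 2)) hz
  have ht_sq : hGrad (fun η => η.2.2 ^ 2) ξ = (2 * ξ.2.2) • _ :=
    hGrad_comp (by simpa using hasDerivAt_pow 2 ξ.2.2) ht
  simp only [dH_pow_four]
  rw [hGrad_add (hz.fun_pow 2) (ht.fun_pow 2), hz_sq, ht_sq, hGrad_zNorm_sq, hGrad_snd_snd,
    gaugeField]
  module

theorem hDiv_gaugeField : hDiv gaugeField ξ = (2 * n + 4) * zNorm ξ ^ 2 := by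
  have hz : DifferentiableAt ℝ (fun η : Heis n => zNorm η ^ 2) ξ :=
    contDiff_zNorm_sq.differentiable one_ne_zero ξ
  have hpos : hDiv (fun η : Heis n => (η.1, η.2.1)) ξ = 2 * n := by
    simp only [hDiv_eq_sum_hDeriv, hDeriv_fst_apply, hDeriv_snd_fst_apply, Pi.single_eq_same]
    simp
    ring
  have hrot : hDiv (fun η : Heis n => (η.2.1, -η.1)) ξ = 0 := by
    have hneg (j : Fin n) : hDeriv (0, Pi.single j 1) (fun η => -η.1 j) ξ = 0 := by
      rw [hDeriv_comp (φ := Neg.neg) _ (hasDerivAt_neg _) (by fun_prop), hDeriv_fst_apply]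
      simp
    simp [hDiv_eq_sum_hDeriv, hDeriv_snd_fst_apply, hneg]
  have hrot_sq : hDot (ξ.2.1, -ξ.1) (ξ.2.1, -ξ.1) = hDot (ξ.1, ξ.2.1) (ξ.1, ξ.2.1) := by
    simp [hDot, add_comm]
  unfold gaugeField
  rw [hDiv_add (hz.fun_smul (by fun_prop)) (by fun_prop), hDiv_smul hz (by fun_prop),
    hDiv_smul (by fun_prop) (by fun_prop), hGrad_zNorm_sq, hGrad_snd_snd, hDot_smul_left,
    hDot_smul_left, hpos, hrot, hrot_sq, ← zNorm_sq]
  ring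

variable {ξ} in
theorem hGrad_log_dH (hξ : ξ ≠ 0) :
    hGrad (fun η => log (dH η)) ξ = (1 / dH ξ ^ 4) • gaugeField ξ := by
  have hlog : HasDerivAt (fun s => 1 / 4 * log s) (1 / 4 * (dH ξ ^ 4)⁻¹) (dH ξ ^ 4) :=
    (Real.hasDerivAt_log (pow_pos (dH_pos hξ) 4).ne').const_mul _
  simp only [log_dH]
  rw [hGrad_comp hlog (contDiff_dH_pow_four.differentiable one_ne_zero ξ), hGrad_dH_pow_four,
    smul_smul]
  congr 1
  ring

theorem hNorm_div_smul_gaugeField_sq (a : ℝ) :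
    hNorm ((a / dH ξ ^ 4) • gaugeField ξ) ^ 2 = a ^ 2 * (zNorm ξ ^ 2 / dH ξ ^ 4) := by
  rw [hNorm_smul_sq, hNorm_gaugeField_sq]
  obtain h | h := (dH_nonneg ξ).eq_or_lt
  · simp [← h]
  · field_simp

variable {ξ} in
theorem contDiffAt_div_smul_gaugeField {m : WithTop ℕ∞} (a : ℝ) (hξ : ξ ≠ 0) :
    ContDiffAt ℝ m (fun η => (a / dH η ^ 4) • gaugeField η) ξ :=
  (contDiffAt_const.div contDiff_dH_pow_four.contDiffAt (pow_pos (dH_pos hξ) 4).ne').smul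
    contDiff_gaugeField.contDiffAt

variable {ξ} in
theorem hDiv_div_smul_gaugeField (a : ℝ) (hξ : ξ ≠ 0) :
    hDiv (fun η => (a / dH η ^ 4) • gaugeField η) ξ =
      2 * n * a * (zNorm ξ ^ 2 / dH ξ ^ 4) := by
  have hd : 0 < dH ξ := dH_pos hξ
  have hinv : HasDerivAt (fun s => a / s) (-a / (dH ξ ^ 4) ^ 2) (dH ξ ^ 4) := by
    simpa using (hasDerivAt_const (dH ξ ^ 4) a).fun_div (hasDerivAt_id _) (pow_pos hd 4).ne'
  have hd4 : DifferentiableAt ℝ (fun η : Heis n => dH η ^ 4) ξ :=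
    contDiff_dH_pow_four.differentiable one_ne_zero ξ
  have hdiv : DifferentiableAt ℝ (fun η : Heis n => a / dH η ^ 4) ξ :=
    hinv.differentiableAt.comp ξ hd4
  rw [hDiv_smul hdiv (contDiff_gaugeField.differentiable one_ne_zero ξ), hGrad_comp hinv hd4,
    hGrad_dH_pow_four, hDiv_gaugeField, hDot_smul_left, hDot_smul_left, ← hNorm_sq,
    hNorm_gaugeField_sq]
  field_simp
  ring

theorem sq_mul_integral_le_integral_hNorm_hGrad_sq {f : Heis n → ℝ} (hf : ContDiff ℝ 1 f)
    (hc : HasCompactSupport f) (h0 : 0 ∉ tsupport f) :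
    n ^ 2 * ∫ ξ, zNorm ξ ^ 2 / dH ξ ^ 4 * f ξ ^ 2 ≤ ∫ ξ, hNorm (hGrad f ξ) ^ 2 := by
  let V : Heis n → (Fin n → ℝ) × (Fin n → ℝ) := fun η => (n / dH η ^ 4) • gaugeField η
  have hV (ξ : Heis n) : (hDiv V ξ - hNorm (V ξ) ^ 2) * f ξ ^ 2 =
      n ^ 2 * (zNorm ξ ^ 2 / dH ξ ^ 4 * f ξ ^ 2) := by
    by_cases hξ : ξ = 0
    · simp [hξ, image_eq_zero_of_notMem_tsupport h0]
    · rw [hDiv_div_smul_gaugeField n hξ, hNorm_div_smul_gaugeField_sq]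
      ring
  rw [← integral_const_mul, ← integral_congr_ae (.of_forall hV)]
  exact integral_hDiv_sub_hNorm_sq_mul_sq_le hf hc fun ξ hξ =>
    contDiffAt_div_smul_gaugeField n (ne_of_mem_of_not_mem hξ h0)

end Gauge

section LogPolar

variable {n : ℕ}

/-- The anisotropic dilation `(z, t) ↦ (l z, l² t)`, for which the gauge is homogeneous of
degree one. -/
def dilation (l : ℝ) (ξ : Heis n) : Heis n := (l • ξ.1, l • ξ.2.1, l ^ 2 • ξ.2.2)

theorem measurable_dilation (l : ℝ) : Measurable (dilation l : Heis n → Heis n) := by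
  unfold dilation
  fun_prop

theorem zNorm_dilation_sq (l : ℝ) (ξ : Heis n) : zNorm (dilation l ξ) ^ 2 = l ^ 2 * zNorm ξ ^ 2 :=
  hNorm_smul_sq l (ξ.1, ξ.2.1)

theorem dH_dilation {l : ℝ} (hl : 0 ≤ l) (ξ : Heis n) : dH (dilation l ξ) = l * dH ξ := by
  refine (pow_left_inj₀ (dH_nonneg _) (mul_nonneg hl (dH_nonneg ξ)) four_ne_zero).1 ?_
  rw [mul_pow, dH_pow_four, dH_pow_four, zNorm_dilation_sq]
  simp only [dilation, smul_eq_mul]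
  ring

theorem log_dH_dilation (a : ℝ) {ξ : Heis n} (hξ : ξ ≠ 0) :
    log (dH (dilation (exp a) ξ)) = a + log (dH ξ) := by
  rw [dH_dilation (exp_pos a).le, Real.log_mul (exp_pos a).ne' (dH_pos hξ).ne', Real.log_exp]

theorem map_dilation_volume {l : ℝ} (hl : 0 < l) :
    (volume : Measure (Heis n)).map (dilation l) =
      ENNReal.ofReal ((l ^ (2 * n + 2))⁻¹) • volume := by
  have hx := Measure.map_addHaar_smul (volume : Measure (Fin n → ℝ)) hl.ne'
  have ht := Measure.map_addHaar_smul (volume : Measure ℝ) (pow_pos hl 2).ne'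
  have mx : Measurable fun x : Fin n → ℝ => l • x := by fun_prop
  have mt : Measurable fun t : ℝ => l ^ 2 • t := by fun_prop
  change Measure.map (Prod.map (fun x => l • x) (Prod.map (fun y => l • y) fun t => l ^ 2 • t))
    (Measure.prod volume (Measure.prod volume volume)) =
      _ • Measure.prod volume (Measure.prod volume volume)
  rw [← Measure.map_prod_map _ _ mx (mx.prodMap mt), ← Measure.map_prod_map _ _ mx mt, hx, ht]
  simp only [Measure.prod_smul_left, Measure.prod_smul_right, smul_smul, Module.finrank_fin_fun,
    Module.finrank_self]
  rw [← ENNReal.ofReal_mul (by positivity), ← ENNReal.ofReal_mul (by positivity),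
    abs_of_pos (by positivity), abs_of_pos (by positivity), ← mul_inv, ← mul_inv]
  congr 3
  ring

variable {ρ : Heis n → ℝ}

instance Heis.nullSingletonClass_volume : NullSingletonClass (volume : Measure (Heis n)) :=
  Measure.IsAddHaarMeasure.nullSingletonClass _

theorem measurable_log_dH : Measurable fun ξ : Heis n => log (dH ξ) :=
  Real.measurable_log.comp continuous_dH.measurable

theorem map_dilation_withDensity (hρ : Measurable ρ) {l : ℝ} (hl : 0 < l)
    (hom : ∀ ξ, ρ (dilation l ξ) = (l ^ (2 * n + 2))⁻¹ * ρ ξ) :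
    (volume.withDensity fun ξ => ENNReal.ofReal (ρ ξ)).map (dilation l) =
      volume.withDensity fun ξ => ENNReal.ofReal (ρ ξ) := by
  have hdil := measurable_dilation (n := n) l
  have hρ' : Measurable fun ξ => ENNReal.ofReal (ρ ξ) := hρ.ennreal_ofReal
  have hpull (ξ : Heis n) : ENNReal.ofReal (ρ ξ) =
      ENNReal.ofReal (l ^ (2 * n + 2)) * ENNReal.ofReal (ρ (dilation l ξ)) := by
    rw [← ENNReal.ofReal_mul (by positivity), hom, mul_inv_cancel_left₀ (by positivity)]
  ext S hS
  rw [Measure.map_apply hdil hS, withDensity_apply _ (hdil hS), withDensity_apply _ hS]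
  calc ∫⁻ ξ in dilation l ⁻¹' S, ENNReal.ofReal (ρ ξ)
      = ENNReal.ofReal (l ^ (2 * n + 2)) *
          ∫⁻ ξ in dilation l ⁻¹' S, ENNReal.ofReal (ρ (dilation l ξ)) := by
        rw [← lintegral_const_mul' _ _ ENNReal.ofReal_ne_top]
        exact lintegral_congr hpull
    _ = ENNReal.ofReal (l ^ (2 * n + 2)) * (ENNReal.ofReal ((l ^ (2 * n + 2))⁻¹) *
          ∫⁻ ξ in S, ENNReal.ofReal (ρ ξ)) := by
        rw [← setLIntegral_map hS hρ' hdil, map_dilation_volume hl, Measure.restrict_smul,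
          lintegral_smul_measure, smul_eq_mul]
    _ = ∫⁻ ξ in S, ENNReal.ofReal (ρ ξ) := by
        rw [← mul_assoc, ← ENNReal.ofReal_mul (by positivity), mul_inv_cancel₀ (by positivity),
          ENNReal.ofReal_one, one_mul]

/-- The distribution of `log d` under the measure `ρ dξ`. -/
def logGaugeMeasure (ρ : Heis n → ℝ) : Measure ℝ :=
  (volume.withDensity fun ξ => ENNReal.ofReal (ρ ξ)).map fun ξ => log (dH ξ)

theorem isAddLeftInvariant_logGaugeMeasure (hρ : Measurable ρ)
    (hom : ∀ l > 0, ∀ ξ, ρ (dilation l ξ) = (l ^ (2 * n + 2))⁻¹ * ρ ξ) :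
    (logGaugeMeasure ρ).IsAddLeftInvariant := by
  refine ⟨fun a => ?_⟩
  set μ := volume.withDensity fun ξ => ENNReal.ofReal (ρ ξ) with hμ
  have hshift : (fun s => a + s) ∘ (fun ξ : Heis n => log (dH ξ)) =ᵐ[μ]
      (fun ξ => log (dH ξ)) ∘ dilation (exp a) := by
    have hne : ∀ᵐ ξ ∂μ, ξ ≠ 0 :=
      (withDensity_absolutelyContinuous _ _).ae_le (Measure.ae_ne volume 0)
    filter_upwards [hne] with ξ hξ using (log_dH_dilation a hξ).symm
  calc (logGaugeMeasure ρ).map (fun s => a + s)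
      = μ.map ((fun s => a + s) ∘ fun ξ => log (dH ξ)) :=
        Measure.map_map (measurable_const_add a) measurable_log_dH
    _ = μ.map ((fun ξ => log (dH ξ)) ∘ dilation (exp a)) := Measure.map_congr hshift
    _ = logGaugeMeasure ρ := by
        rw [← Measure.map_map measurable_log_dH (measurable_dilation _), hμ,
          map_dilation_withDensity hρ (exp_pos a) (hom _ (exp_pos a)), logGaugeMeasure]

theorem isFiniteMeasureOnCompacts_logGaugeMeasure (hρ : ContinuousOn ρ {0}ᶜ) :
    IsFiniteMeasureOnCompacts (logGaugeMeasure ρ) := by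
  refine ⟨fun K hK => ?_⟩
  set A : Set (Heis n) := dH ⁻¹' (exp '' K)
  have hA : IsCompact A := isCompact_preimage_dH (hK.image continuous_exp)
  have hA0 : A ⊆ {0}ᶜ := by
    rintro ξ ⟨s, -, hs⟩ rfl
    exact (exp_pos s).ne' (hs.trans dH_zero)
  have hpre : (fun ξ : Heis n => log (dH ξ)) ⁻¹' K ≤ᵐ[volume] A := by
    filter_upwards [Measure.ae_ne volume (0 : Heis n)] with ξ hξ hK
    exact ⟨_, hK, exp_log (dH_pos hξ)⟩
  rw [logGaugeMeasure, Measure.map_apply measurable_log_dH hK.measurableSet,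
    withDensity_apply _ (measurable_log_dH hK.measurableSet)]
  exact (lintegral_mono' (Measure.restrict_mono_ae hpre) le_rfl).trans_lt
    ((hρ.mono hA0).integrableOn_compact hA).lintegral_lt_top

theorem logGaugeMeasure_ne_zero (hρ : ContinuousOn ρ {0}ᶜ) (hpos : ∃ ξ ≠ 0, 0 < ρ ξ) :
    logGaugeMeasure ρ ≠ 0 := by
  obtain ⟨ξ, hξ, hρξ⟩ := hpos
  have hm : Measurable ρ := measurable_of_continuousOn_compl_singleton 0 hρ
  have hopen : IsOpen ({0}ᶜ ∩ ρ ⁻¹' Set.Ioi 0) :=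
    hρ.isOpen_inter_preimage isOpen_compl_singleton isOpen_Ioi
  intro h
  rw [logGaugeMeasure, Measure.map_eq_zero_iff measurable_log_dH.aemeasurable,
    withDensity_eq_zero_iff hm.ennreal_ofReal.aemeasurable] at h
  refine (hopen.measure_pos volume ⟨ξ, hξ, hρξ⟩).ne' (measure_mono_null ?_ h)
  intro η hη
  simpa using hη.2

theorem exists_integral_log_dH_mul_eq (hρ : ContinuousOn ρ {0}ᶜ) (hρ0 : ∀ ξ, 0 ≤ ρ ξ)
    (hpos : ∃ ξ ≠ 0, 0 < ρ ξ)
    (hom : ∀ l > 0, ∀ ξ, ρ (dilation l ξ) = (l ^ (2 * n + 2))⁻¹ * ρ ξ) :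
    ∃ c > 0, ∀ h : ℝ → ℝ, AEStronglyMeasurable h →
      ∫ ξ, h (log (dH ξ)) * ρ ξ = c * ∫ s, h s := by
  have hm : Measurable ρ := measurable_of_continuousOn_compl_singleton 0 hρ
  have := isAddLeftInvariant_logGaugeMeasure hm hom
  have := isFiniteMeasureOnCompacts_logGaugeMeasure hρ
  have hhaar := Measure.isAddLeftInvariant_eq_smul (logGaugeMeasure ρ) (volume : Measure ℝ)
  set c := Measure.addHaarScalarFactor (logGaugeMeasure ρ) (volume : Measure ℝ)
  have hc : c ≠ 0 := fun hc => logGaugeMeasure_ne_zero hρ hpos (by rw [hhaar, hc, zero_smul])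
  refine ⟨c, by positivity, fun h hh => ?_⟩
  calc ∫ ξ, h (log (dH ξ)) * ρ ξ
      = ∫ ξ, h (log (dH ξ)) ∂volume.withDensity fun ξ => ENNReal.ofReal (ρ ξ) := by
        rw [integral_withDensity_eq_integral_toReal_smul hm.ennreal_ofReal (by simp)]
        simp only [ENNReal.toReal_ofReal (hρ0 _), smul_eq_mul, mul_comm]
    _ = ∫ s, h s ∂logGaugeMeasure ρ := by
        refine (integral_map measurable_log_dH.aemeasurable ?_).symm
        change AEStronglyMeasurable h (logGaugeMeasure ρ)
        rw [hhaar]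
        exact hh.smul_measure c
    _ = c * ∫ s, h s := by
        rw [hhaar, integral_smul_nnreal_measure, NNReal.smul_def, smul_eq_mul]

end LogPolar

section RadialFunctions

variable {n : ℕ}

theorem continuousOn_zNorm_sq_div_dH_pow (k : ℕ) :
    ContinuousOn (fun ξ : Heis n => zNorm ξ ^ 2 / dH ξ ^ k) {0}ᶜ :=
  (contDiff_zNorm_sq (m := 0)).continuous.continuousOn.div (continuous_dH.pow k).continuousOn
    fun _ hξ => (pow_pos (dH_pos hξ) k).ne'

theorem exists_integral_radial_eq (hn : 0 < n) :
    ∃ c > 0, ∀ u : ℝ → ℝ, AEStronglyMeasurable u →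
      ∫ ξ : Heis n, zNorm ξ ^ 2 / dH ξ ^ 4 * (exp (-n * log (dH ξ)) * u (log (dH ξ))) ^ 2 =
        c * ∫ s, u s ^ 2 := by
  have hpos : ∃ ξ : Heis n, ξ ≠ 0 ∧ 0 < zNorm ξ ^ 2 / dH ξ ^ (2 * n + 4) := by
    have hz : zNorm ((1, 0, 0) : Heis n) ^ 2 = n := by simp [zNorm]
    have hne : ((1, 0, 0) : Heis n) ≠ 0 := fun h => by
      simpa using congrFun (congrArg Prod.fst h) ⟨0, hn⟩
    have := dH_pos hne
    exact ⟨_, hne, by rw [hz]; positivity⟩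
  have hom (l : ℝ) (hl : l > 0) (ξ : Heis n) :
      zNorm (dilation l ξ) ^ 2 / dH (dilation l ξ) ^ (2 * n + 4) =
        (l ^ (2 * n + 2))⁻¹ * (zNorm ξ ^ 2 / dH ξ ^ (2 * n + 4)) := by
    rw [zNorm_dilation_sq, dH_dilation hl.le, mul_pow, mul_div_mul_comm]
    congr 1
    field_simp
    ring
  obtain ⟨c, hc, hint⟩ := exists_integral_log_dH_mul_eq
    (continuousOn_zNorm_sq_div_dH_pow (2 * n + 4)) (fun ξ => by have := dH_nonneg ξ; positivity)
    hpos hom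
  refine ⟨c, hc, fun u hu => ?_⟩
  rw [← hint (fun s => u s ^ 2) (hu.pow 2)]
  refine integral_congr_ae ?_
  filter_upwards [Measure.ae_ne volume (0 : Heis n)] with ξ hξ
  have hd : 0 < dH ξ := dH_pos hξ
  have hexp : exp (-n * log (dH ξ)) = (dH ξ ^ n)⁻¹ := by
    rw [neg_mul, exp_neg, exp_nat_mul, exp_log hd]
  rw [hexp]
  field_simp
  ring

theorem hNorm_hGrad_comp_log_dH_sq {Φ : ℝ → ℝ} {Φ' : ℝ} {ξ : Heis n} (hξ : ξ ≠ 0)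
    (hΦ : HasDerivAt Φ Φ' (log (dH ξ))) :
    hNorm (hGrad (fun η => Φ (log (dH η))) ξ) ^ 2 = zNorm ξ ^ 2 / dH ξ ^ 4 * Φ' ^ 2 := by
  rw [hGrad_comp hΦ ((contDiffAt_log_dH hξ).differentiableAt one_ne_zero), hNorm_smul_sq,
    hGrad_log_dH hξ, hNorm_div_smul_gaugeField_sq]
  ring

-- `Φ 0 = 0` is what makes the function vanish at the origin, where `log (dH 0) = log 0 = 0`.
theorem isTestAwayZero_comp_log_dH {Φ : ℝ → ℝ} (hΦ : ContDiff ℝ (⊤ : ℕ∞) Φ)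
    (hc : HasCompactSupport Φ) (h0 : Φ 0 = 0) :
    IsTestAwayZero fun ξ : Heis n => Φ (log (dH ξ)) := by
  set A : Set (Heis n) := dH ⁻¹' (exp '' tsupport Φ)
  have hA : IsCompact A := isCompact_preimage_dH (hc.isCompact.image continuous_exp)
  have hA0 : (0 : Heis n) ∉ A := by
    rintro ⟨s, -, hs⟩
    exact (exp_pos s).ne' (hs.trans dH_zero)
  have hsupp : tsupport (fun ξ : Heis n => Φ (log (dH ξ))) ⊆ A := by
    refine closure_minimal (fun ξ hξ => ?_) hA.isClosed
    have hξ0 : ξ ≠ 0 := by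
      rintro rfl
      exact hξ (by simpa using h0)
    exact ⟨_, subset_tsupport Φ hξ, exp_log (dH_pos hξ0)⟩
  exact ⟨contDiff_of_tsupport fun ξ hξ => hΦ.contDiffAt.comp ξ
      (contDiffAt_log_dH (ne_of_mem_of_not_mem (hsupp hξ) hA0)),
    hA.of_isClosed_subset (isClosed_tsupport _) hsupp, fun h => hA0 (hsupp h)⟩

end RadialFunctions

section OneDimensional

theorem integral_mul_deriv_self_eq_zero {ψ : ℝ → ℝ} (hψ : ContDiff ℝ 1 ψ)
    (hc : HasCompactSupport ψ) : ∫ s, ψ s * deriv ψ s = 0 := by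
  have hd : Continuous (deriv ψ) := hψ.continuous_deriv le_rfl
  have hderiv (s : ℝ) : HasDerivAt ψ (deriv ψ s) s :=
    (hψ.differentiable one_ne_zero s).hasDerivAt
  have hparts := integral_mul_deriv_eq_deriv_mul_of_integrable
    (fun s _ => hderiv s) (fun s _ => hderiv s)
    ((hψ.continuous.mul hd).integrable_of_hasCompactSupport hc.mul_right)
    ((hd.mul hψ.continuous).integrable_of_hasCompactSupport hc.mul_left)
    ((hψ.continuous.mul hψ.continuous).integrable_of_hasCompactSupport hc.mul_right)
  simp only [mul_comm (deriv ψ _)] at hparts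
  linarith

theorem integral_deriv_sub_mul_sq {ψ : ℝ → ℝ} (hψ : ContDiff ℝ 1 ψ) (hc : HasCompactSupport ψ)
    (a : ℝ) :
    ∫ s, (deriv ψ s - a * ψ s) ^ 2 = (∫ s, deriv ψ s ^ 2) + a ^ 2 * ∫ s, ψ s ^ 2 := by
  have hd : Continuous (deriv ψ) := hψ.continuous_deriv le_rfl
  have hψ_sq : Integrable fun s => ψ s ^ 2 := by
    simp only [sq]
    exact (hψ.continuous.mul hψ.continuous).integrable_of_hasCompactSupport hc.mul_right
  have hd_sq : Integrable fun s => deriv ψ s ^ 2 := by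
    simp only [sq]
    exact (hd.mul hd).integrable_of_hasCompactSupport hc.deriv.mul_right
  have hsum : Integrable fun s => deriv ψ s ^ 2 + a ^ 2 * ψ s ^ 2 :=
    hd_sq.add (hψ_sq.const_mul _)
  have hcross : Integrable fun s => ψ s * deriv ψ s :=
    (hψ.continuous.mul hd).integrable_of_hasCompactSupport hc.mul_right
  calc ∫ s, (deriv ψ s - a * ψ s) ^ 2
      = ∫ s, (deriv ψ s ^ 2 + a ^ 2 * ψ s ^ 2 - 2 * a * (ψ s * deriv ψ s)) := by
        refine integral_congr_ae (.of_forall fun s => ?_)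
        ring
    _ = (∫ s, deriv ψ s ^ 2) + a ^ 2 * ∫ s, ψ s ^ 2 := by
        rw [integral_sub hsum (hcross.const_mul _), integral_add hd_sq (hψ_sq.const_mul _),
          integral_const_mul, integral_const_mul, integral_mul_deriv_self_eq_zero hψ hc, mul_zero,
          sub_zero]

theorem exists_integral_deriv_sq_lt {δ : ℝ} (hδ : 0 < δ) :
    ∃ ψ : ℝ → ℝ, ContDiff ℝ (⊤ : ℕ∞) ψ ∧ HasCompactSupport ψ ∧ ψ 0 = 0 ∧
      ∫ s, deriv ψ s ^ 2 < δ * ∫ s, ψ s ^ 2 := by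
  let φ : ContDiffBump (2 : ℝ) := ⟨1 / 2, 1, by norm_num, by norm_num⟩
  have hφ0 : φ 0 = 0 := φ.zero_of_le_dist (by simp [φ])
  have hφ_pos : 0 < ∫ s, φ s ^ 2 := by
    refine (φ.continuous.pow 2).integral_pos_of_hasCompactSupport_nonneg_nonzero (x := 2)
      (φ.hasCompactSupport.comp_left (g := fun x : ℝ => x ^ 2) (by simp)) (fun s => sq_nonneg _) ?_
    simp [φ.one_of_mem_closedBall (Metric.mem_closedBall_self φ.rIn_pos.le)]
  obtain ⟨b, hb, hbδ⟩ := exists_pos_mul_lt (mul_pos hδ hφ_pos) (∫ s, deriv φ s ^ 2)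
  have hε : 0 < √b := Real.sqrt_pos.2 hb
  refine ⟨fun s => φ (√b * s), φ.contDiff.comp (by fun_prop),
    φ.hasCompactSupport.comp_homeomorph (Homeomorph.mulLeft₀ _ hε.ne'), by simpa using hφ0, ?_⟩
  have hderiv (s : ℝ) : deriv (fun s => φ (√b * s)) s ^ 2 = b * deriv φ (√b * s) ^ 2 := by
    rw [deriv_comp_mul_left, smul_eq_mul, mul_pow, Real.sq_sqrt hb.le]
  simp only [hderiv]
  rw [integral_const_mul, Measure.integral_comp_mul_left (fun s => deriv φ s ^ 2),
    Measure.integral_comp_mul_left (fun s => φ s ^ 2), smul_eq_mul, smul_eq_mul, mul_left_comm,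
    mul_left_comm δ]
  exact mul_lt_mul_of_pos_left (by linarith) (by positivity)

end OneDimensional

section Sharpness

variable {n : ℕ}

theorem zNorm_sq_div_mul_abs_sq_div (ξ : Heis n) (a : ℝ) :
    zNorm ξ ^ 2 / dH ξ ^ 2 * (|a| ^ 2 / dH ξ ^ 2) = zNorm ξ ^ 2 / dH ξ ^ 4 * a ^ 2 := by
  rw [sq_abs]
  ring

theorem exists_integral_hNorm_hGrad_sq_lt (hn : 0 < n) {C : ℝ} (hC : n ^ 2 < C) :
    ∃ f : Heis n → ℝ, IsTestAwayZero f ∧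
      ∫ ξ, hNorm (hGrad f ξ) ^ 2 < C * ∫ ξ, zNorm ξ ^ 2 / dH ξ ^ 4 * f ξ ^ 2 := by
  obtain ⟨ψ, hψ, hc, hψ0, hlt⟩ := exists_integral_deriv_sq_lt (sub_pos.2 hC)
  obtain ⟨c, hc_pos, hradial⟩ := exists_integral_radial_eq hn
  have hψ1 : ContDiff ℝ 1 ψ := hψ.of_le (by norm_cast)
  let Φ : ℝ → ℝ := fun s => exp (-n * s) * ψ s
  have hΦ (s : ℝ) : HasDerivAt Φ (exp (-n * s) * (deriv ψ s - n * ψ s)) s := by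
    have hprod := ((hasDerivAt_id' s).const_mul (-n : ℝ)).exp.fun_mul
      (hψ1.differentiable one_ne_zero s).hasDerivAt
    refine hprod.congr_deriv ?_
    ring
  have henergy : ∫ ξ : Heis n, hNorm (hGrad (fun η => Φ (log (dH η))) ξ) ^ 2 =
      c * ((∫ s, deriv ψ s ^ 2) + n ^ 2 * ∫ s, ψ s ^ 2) := by
    rw [← integral_deriv_sub_mul_sq hψ1 hc, ← hradial]
    · refine integral_congr_ae ?_
      filter_upwards [Measure.ae_ne volume (0 : Heis n)] with ξ hξ
      exact hNorm_hGrad_comp_log_dH_sq hξ (hΦ _)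
    · exact ((hψ1.continuous_deriv le_rfl).sub
        (continuous_const.mul hψ.continuous)).aestronglyMeasurable
  refine ⟨fun ξ => Φ (log (dH ξ)), isTestAwayZero_comp_log_dH (by fun_prop) hc.mul_left
    (by simp [Φ, hψ0]), ?_⟩
  rw [henergy, hradial ψ hψ.continuous.aestronglyMeasurable, mul_left_comm]
  gcongr
  linarith

end Sharpness

/-- Corollary 3.4 (3): the weighted `L²` Hardy inequality on `ℍⁿ`
with sharp constant `((Q − 2)/2)²`. -/
theorem L2_hardy_Heisenberg_sharp
    (n : ℕ) (hQ : (2 : ℝ) < 2 * n + 2) :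
    (∀ f : Heis n → ℝ, IsTestAwayZero f →
      ((2 * n + 2 - 2 : ℝ) / 2) ^ 2 *
          ∫ ξ : Heis n, zNorm ξ ^ 2 / dH ξ ^ 2 * (|f ξ| ^ 2 / dH ξ ^ 2) ≤
        ∫ ξ : Heis n, hNorm (hGrad f ξ) ^ 2) ∧
    (∀ C' : ℝ, ((2 * n + 2 - 2 : ℝ) / 2) ^ 2 < C' →
      ∃ f : Heis n → ℝ, IsTestAwayZero f ∧
        ¬ (C' * ∫ ξ : Heis n, zNorm ξ ^ 2 / dH ξ ^ 2 * (|f ξ| ^ 2 / dH ξ ^ 2) ≤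
            ∫ ξ : Heis n, hNorm (hGrad f ξ) ^ 2)) := by
  have hn : 0 < n := by
    rify
    linarith
  have hconst : (2 * n + 2 - 2 : ℝ) / 2 = n := by ring
  simp only [zNorm_sq_div_mul_abs_sq_div, hconst]
  refine ⟨fun f ⟨hf, hc, h0⟩ => ?_, fun C' hC' => ?_⟩
  · exact sq_mul_integral_le_integral_hNorm_hGrad_sq (hf.of_le (by norm_cast)) hc h0
  · obtain ⟨f, hf, hlt⟩ := exists_integral_hNorm_hGrad_sq_lt hn hC'
    exact ⟨f, hf, hlt.not_ge⟩
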